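/- arXiv:0909.1599 — 2 statements merged into one kernel-verified Lean document; each statement's English description precedes it below -/
import Mathlib

section
/- Let N ≥ 1, M = N+1, let {φ_k}_{k=1}^M be the real harmonic tight frame in ℝ^N, and let ψ_k = γ(−1)^k φ_k, k = 1,...,M, with a fixed sign γ = ±1 (a modulated harmonic tight frame). Then for all 1 ≤ k < ℓ ≤ M, ⟨ψ_k, ψ_ℓ⟩ = −1/N; in particular the modulated harmonic tight frame is a restricted equiangular tight frame. -/
/-- The real harmonic tight frame of `M` vectors in `ℝ^N` (0-based indexing: `htf N M k`
is the vector `φ_{k+1}` of the paper, for `k = 0, …, M-1`). -/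
noncomputable def htf (N M : ℕ) (k : Fin M) (i : Fin N) : ℝ :=
  if N % 2 = 0 then
    if (i : ℕ) < N / 2 then
      Real.sqrt (2 / N) * Real.cos (((2 * (i : ℕ) + 1 : ℕ) : ℝ) * (k : ℕ) * Real.pi / M)
    else
      Real.sqrt (2 / N) *
        Real.sin (((2 * ((i : ℕ) - N / 2) + 1 : ℕ) : ℝ) * (k : ℕ) * Real.pi / M)
  else
    if (i : ℕ) = 0 then Real.sqrt (2 / N) * (1 / Real.sqrt 2)
    else if (i : ℕ) ≤ (N - 1) / 2 then
      Real.sqrt (2 / N) * Real.cos (((2 * (i : ℕ) : ℕ) : ℝ) * (k : ℕ) * Real.pi / M)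
    else
      Real.sqrt (2 / N) *
        Real.sin (((2 * ((i : ℕ) - (N - 1) / 2) : ℕ) : ℝ) * (k : ℕ) * Real.pi / M)

/-- A restricted equiangular tight frame: a unit-norm tight frame (`F*F = (M/N) I_N`) whose
pairwise inner products `⟨ψ_k, ψ_ℓ⟩` (for `k < ℓ`) all equal one common constant. -/
def IsRestrictedETF {M N : ℕ} (Ψ : Fin M → Fin N → ℝ) : Prop :=
  (∀ k : Fin M, ∑ i : Fin N, Ψ k i ^ 2 = 1) ∧
  (∀ i j : Fin N,
    ∑ k : Fin M, Ψ k i * Ψ k j = ((M : ℝ) / N) * (if i = j then 1 else 0)) ∧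
  (∃ c : ℝ, ∀ k ℓ : Fin M, k < ℓ → ∑ i : Fin N, Ψ k i * Ψ ℓ i = c)

/-!
The Gram kernel of the harmonic frame is `⟨φ_k, φ_ℓ⟩ = U_{N-1}(cos ((k - ℓ)π/M)) / N`, where
`U_{N-1}(cos θ) = sin (Nθ) / sin θ` is the Chebyshev polynomial of the second kind. For `M = N + 1`
the angle `θ = (k - ℓ)π/M` satisfies `Nθ = (k - ℓ)π - θ`, so the kernel is `-(-1)^(k - ℓ) / N`
off the diagonal, and the modulation cancels the alternating sign. The modulated vectors thus have
the Gram matrix `G` of a regular simplex, for which `G² = (M/N) G` and `tr G = M`. Consequently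
the frame operator `S` satisfies `tr (S - (M/N) I)² = 0`, which forces `S = (M/N) I`.
-/

section ChebyshevSums

open Polynomial.Chebyshev

theorem chebyshev_U_two_mul_sub_one (R : Type*) [CommRing R] (n : ℕ) :
    U R (2 * n - 1) = 2 * ∑ j ∈ Finset.range n, T R (2 * j + 1) := by
  induction n with
  | zero => simp
  | succ n ih =>
    rw [Finset.sum_range_succ, mul_add, ← ih]
    convert U_eq_two_mul_T_add_U R (2 * n - 1) using 1
    · push_cast; ring_nf
    · ring_nf

theorem chebyshev_U_two_mul (R : Type*) [CommRing R] (n : ℕ) :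
    U R (2 * n) = 1 + 2 * ∑ j ∈ Finset.range n, T R (2 * (j + 1)) := by
  induction n with
  | zero => simp
  | succ n ih =>
    rw [Finset.sum_range_succ, mul_add, ← add_assoc, ← ih]
    convert U_eq_two_mul_T_add_U R (2 * n) using 1
    · push_cast; ring_nf
    · ring_nf

theorem two_mul_sum_cos_odd_mul (n : ℕ) (θ : ℝ) :
    2 * ∑ j : Fin n, Real.cos ((2 * j + 1) * θ) = (U ℝ (2 * n - 1)).eval (Real.cos θ) := by
  simp [chebyshev_U_two_mul_sub_one, Polynomial.eval_finsetSum, Finset.sum_range]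

theorem one_add_two_mul_sum_cos_even_mul (n : ℕ) (θ : ℝ) :
    1 + 2 * ∑ j : Fin n, Real.cos (2 * (j + 1) * θ) = (U ℝ (2 * n)).eval (Real.cos θ) := by
  simp [chebyshev_U_two_mul, Polynomial.eval_finsetSum, Finset.sum_range]

theorem chebyshev_U_eval_cos_of_mul_eq_int_mul_pi {n d : ℤ} {θ : ℝ} (hsin : Real.sin θ ≠ 0)
    (hθ : (n + 2) * θ = d * Real.pi) : (U ℝ n).eval (Real.cos θ) = -(-1) ^ d := by
  refine mul_right_cancel₀ hsin ?_
  calc (U ℝ n).eval (Real.cos θ) * Real.sin θ = Real.sin ((n + 1) * θ) := U_real_cos θ n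
    _ = Real.sin (d * Real.pi - θ) := by rw [← hθ]; ring_nf
    _ = -(-1) ^ d * Real.sin θ := by rw [Real.sin_int_mul_pi_sub, neg_mul]

end ChebyshevSums

section TightFrames

open Matrix

variable {ι κ R : Type*} [Fintype ι] [Fintype κ] [DecidableEq κ]

theorem conjTranspose_mul_self_eq_smul_one_of_gram_sq [CommRing R] [PartialOrder R] [StarRing R]
    [StarOrderedRing R] [NoZeroDivisors R] {F : Matrix ι κ R} {c : R} (hc : IsSelfAdjoint c)
    (hsq : F * Fᴴ * (F * Fᴴ) = c • (F * Fᴴ)) (htr : (F * Fᴴ).trace = c * Fintype.card κ) :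
    Fᴴ * F = c • (1 : Matrix κ κ R) := by
  have htrace : (Fᴴ * F).trace = c * Fintype.card κ := by rw [trace_mul_comm, htr]
  have htrace_sq : (Fᴴ * F * (Fᴴ * F)).trace = c * (c * Fintype.card κ) := by
    rw [Matrix.mul_assoc, trace_mul_comm, Matrix.mul_assoc, Matrix.mul_assoc,
      ← Matrix.mul_assoc, hsq, trace_smul, htr, smul_eq_mul]
  have hherm : (Fᴴ * F - c • (1 : Matrix κ κ R))ᴴ = Fᴴ * F - c • 1 := by
    simp [hc.star_eq]
  rw [← sub_eq_zero, ← trace_conjTranspose_mul_self_eq_zero_iff, hherm]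
  simp only [sub_mul, mul_sub, trace_sub, Matrix.smul_mul, Matrix.mul_smul, Matrix.one_mul,
    Matrix.mul_one, trace_smul, trace_one, htrace, htrace_sq, smul_eq_mul]
  ring

variable (ι R) in
/-- The Gram matrix of the vertices of a regular simplex centred at the origin, indexed by `ι` and
normalised to lie on the unit sphere. -/
def simplexGram [DecidableEq ι] [Field R] : Matrix ι ι R :=
  of fun k l => if k = l then 1 else -1 / (Fintype.card ι - 1)

variable [DecidableEq ι] [Field R]

theorem trace_simplexGram : (simplexGram ι R).trace = Fintype.card ι := by
  simp [simplexGram, trace]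

theorem simplexGram_eq_smul_one_sub_smul_vecMulVec (hι : (Fintype.card ι : R) - 1 ≠ 0) :
    simplexGram ι R = ((Fintype.card ι : R) / (Fintype.card ι - 1)) • (1 : Matrix ι ι R) -
      (1 / ((Fintype.card ι : R) - 1)) • vecMulVec 1 1 := by
  ext k l
  by_cases hkl : k = l
  · simp [simplexGram, hkl, -one_div, ← sub_div, hι]
  · simp [simplexGram, hkl, neg_div]

theorem simplexGram_mul_self (hι : (Fintype.card ι : R) - 1 ≠ 0) :
    simplexGram ι R * simplexGram ι R =
      ((Fintype.card ι : R) / (Fintype.card ι - 1)) • simplexGram ι R := by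
  have hones : vecMulVec 1 1 * vecMulVec 1 1 =
      (Fintype.card ι : R) • (vecMulVec 1 1 : Matrix ι ι R) := by
    ext k l
    simp [mul_apply]
  rw [simplexGram_eq_smul_one_sub_smul_vecMulVec hι]
  simp only [sub_mul, mul_sub, Matrix.smul_mul, Matrix.mul_smul, Matrix.one_mul, Matrix.mul_one,
    hones]
  module

theorem conjTranspose_mul_self_of_gram_eq_simplexGram [PartialOrder R] [StarRing R]
    [StarOrderedRing R] {F : Matrix ι κ R} (hcard : Fintype.card ι = Fintype.card κ + 1)
    (hκ : (Fintype.card κ : R) ≠ 0) (hF : F * Fᴴ = simplexGram ι R) :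
    Fᴴ * F = ((Fintype.card ι : R) / Fintype.card κ) • (1 : Matrix κ κ R) := by
  have hsub : (Fintype.card ι : R) - 1 = Fintype.card κ := by rw [hcard]; simp
  refine conjTranspose_mul_self_eq_smul_one_of_gram_sq
    ((IsSelfAdjoint.natCast _).div (IsSelfAdjoint.natCast _)) ?_ ?_
  · rw [hF, simplexGram_mul_self (hsub ▸ hκ), hsub]
  · rw [hF, trace_simplexGram, div_mul_cancel₀ _ hκ]

theorem isRestrictedETF_of_dotProduct_eq {N : ℕ} (hN : N ≠ 0) {Ψ : Fin (N + 1) → Fin N → ℝ}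
    (hnorm : ∀ k, Ψ k ⬝ᵥ Ψ k = 1) (hinner : ∀ k ℓ, k ≠ ℓ → Ψ k ⬝ᵥ Ψ ℓ = -1 / N) :
    IsRestrictedETF Ψ := by
  have hgram : of Ψ * (of Ψ)ᴴ = simplexGram (Fin (N + 1)) ℝ := by
    ext k ℓ
    have hentry : (of Ψ * (of Ψ)ᴴ) k ℓ = Ψ k ⬝ᵥ Ψ ℓ := rfl
    rcases eq_or_ne k ℓ with rfl | hkℓ
    · rw [hentry, hnorm]; simp [simplexGram]
    · rw [hentry, hinner k ℓ hkℓ]; simp [simplexGram, hkℓ]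
  have htight := conjTranspose_mul_self_of_gram_eq_simplexGram (by simp) (by simpa) hgram
  refine ⟨fun k => ?_, fun i j => ?_, -1 / N, fun k ℓ hkℓ => hinner k ℓ hkℓ.ne⟩
  · simpa only [dotProduct, ← sq] using hnorm k
  · simpa [mul_apply, one_apply] using congr_fun₂ htight i j

end TightFrames

section HarmonicFrame

open Matrix Polynomial.Chebyshev

theorem sqrt_two_div_mul_self (N : ℕ) : √(2 / N : ℝ) * √(2 / N) = 2 / N :=
  Real.mul_self_sqrt (by positivity)

section Coordinates

variable {n M : ℕ} (k : Fin M) (j : Fin n)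

theorem htf_even_castAdd : htf (n + n) M k (Fin.castAdd n j) =
    √(2 / (n + n : ℕ)) * Real.cos ((2 * j + 1) * (k * Real.pi / M)) := by
  simp [htf, ← two_mul, mul_assoc, mul_div_assoc]

theorem htf_even_natAdd : htf (n + n) M k (Fin.natAdd n j) =
    √(2 / (n + n : ℕ)) * Real.sin ((2 * j + 1) * (k * Real.pi / M)) := by
  simp [htf, ← two_mul, mul_assoc, mul_div_assoc]

theorem htf_odd_zero : htf (n + n + 1) M k 0 = √(2 / (n + n + 1 : ℕ)) * (1 / √2) := by
  have hodd : (n + n + 1) % 2 ≠ 0 := by lia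
  simp [htf, hodd]

theorem htf_odd_succ_castAdd : htf (n + n + 1) M k (Fin.castAdd n j).succ =
    √(2 / (n + n + 1 : ℕ)) * Real.cos (2 * (j + 1) * (k * Real.pi / M)) := by
  have hodd : (n + n + 1) % 2 ≠ 0 := by lia
  have hhalf : (n + n) / 2 = n := by lia
  have hj : (j : ℕ) + 1 ≤ n := j.isLt
  simp [htf, hodd, hhalf, hj, mul_assoc, mul_div_assoc]

theorem htf_odd_succ_natAdd : htf (n + n + 1) M k (Fin.natAdd n j).succ =
    √(2 / (n + n + 1 : ℕ)) * Real.sin (2 * (j + 1) * (k * Real.pi / M)) := by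
  have hodd : (n + n + 1) % 2 ≠ 0 := by lia
  have hhalf : (n + n) / 2 = n := by lia
  have hsub : (j : ℕ) + n + 1 - n = j + 1 := by lia
  simp [htf, hodd, hhalf, hsub, mul_assoc, mul_div_assoc]

end Coordinates

variable {N M : ℕ}

theorem htf_dotProduct_even (n : ℕ) (k ℓ : Fin M) : htf (n + n) M k ⬝ᵥ htf (n + n) M ℓ =
    (U ℝ (2 * n - 1)).eval (Real.cos ((k - ℓ) * Real.pi / M)) / (n + n : ℕ) := by
  rw [← two_mul_sum_cos_odd_mul, dotProduct, Fin.sum_univ_add, ← Finset.sum_add_distrib,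
    mul_div_right_comm, Finset.mul_sum, ← sqrt_two_div_mul_self]
  refine Finset.sum_congr rfl fun j _ => ?_
  rw [sub_mul, sub_div, mul_sub, Real.cos_sub, htf_even_castAdd, htf_even_castAdd,
    htf_even_natAdd, htf_even_natAdd]
  ring

theorem htf_dotProduct_odd (n : ℕ) (k ℓ : Fin M) : htf (n + n + 1) M k ⬝ᵥ htf (n + n + 1) M ℓ =
    (U ℝ (2 * n)).eval (Real.cos ((k - ℓ) * Real.pi / M)) / (n + n + 1 : ℕ) := by
  rw [← one_add_two_mul_sum_cos_even_mul, dotProduct, Fin.sum_univ_succ, Fin.sum_univ_add,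
    ← Finset.sum_add_distrib, add_div, mul_div_right_comm, Finset.mul_sum,
    ← sqrt_two_div_mul_self]
  congr 1
  · rw [htf_odd_zero, htf_odd_zero, mul_mul_mul_comm, sqrt_two_div_mul_self, div_mul_div_comm,
      Real.mul_self_sqrt zero_le_two]
    ring
  · refine Finset.sum_congr rfl fun j _ => ?_
    rw [sub_mul, sub_div, mul_sub, Real.cos_sub, htf_odd_succ_castAdd, htf_odd_succ_castAdd,
      htf_odd_succ_natAdd, htf_odd_succ_natAdd]
    ring

theorem htf_dotProduct (k ℓ : Fin M) : htf N M k ⬝ᵥ htf N M ℓ =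
    (U ℝ (N - 1)).eval (Real.cos ((k - ℓ) * Real.pi / M)) / N := by
  rcases Nat.even_or_odd N with ⟨n, rfl⟩ | ⟨n, rfl⟩
  · rw [htf_dotProduct_even]
    push_cast
    ring_nf
  · rw [two_mul, htf_dotProduct_odd]
    push_cast
    ring_nf

theorem htf_dotProduct_self (hN : N ≠ 0) (k : Fin M) : htf N M k ⬝ᵥ htf N M k = 1 := by
  simp [htf_dotProduct, hN]

theorem sin_sub_mul_pi_div_ne_zero {k ℓ : Fin M} (hkℓ : k ≠ ℓ) :
    Real.sin ((k - ℓ) * Real.pi / M) ≠ 0 := by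
  have hk : (k : ℝ) < M := mod_cast k.isLt
  have hℓ : (ℓ : ℝ) < M := mod_cast ℓ.isLt
  have hk0 : (0 : ℝ) ≤ k := k.val.cast_nonneg
  have hM : (0 : ℝ) < M := hk0.trans_lt hk
  have hsub : (k - ℓ : ℝ) ≠ 0 := by simpa [sub_eq_zero, Fin.val_inj] using hkℓ
  have hlower : -(M : ℝ) < k - ℓ := by linarith
  have hupper : (k - ℓ : ℝ) < M := (sub_le_self _ ℓ.val.cast_nonneg).trans_lt hk
  rw [Ne, Real.sin_eq_zero_iff_of_lt_of_lt]
  · exact div_ne_zero (mul_ne_zero hsub Real.pi_ne_zero) hM.ne'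
  · rw [lt_div_iff₀ hM]
    linarith [mul_lt_mul_of_pos_right hlower Real.pi_pos]
  · rw [div_lt_iff₀ hM]
    linarith [mul_lt_mul_of_pos_right hupper Real.pi_pos]

theorem htf_succ_dotProduct_of_ne {k ℓ : Fin (N + 1)} (hkℓ : k ≠ ℓ) :
    htf N (N + 1) k ⬝ᵥ htf N (N + 1) ℓ = -(-1) ^ (k + ℓ : ℕ) / N := by
  have hangle : (((N - 1 : ℤ) : ℝ) + 2) * ((k - ℓ) * Real.pi / (N + 1 : ℕ)) =
      ((k - ℓ : ℤ) : ℝ) * Real.pi := by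
    push_cast
    field_simp
    ring
  have hsign : (-1 : ℝ) ^ (k - ℓ : ℤ) = (-1) ^ (k + ℓ : ℕ) := by
    rw [zpow_sub₀ (by simp), zpow_natCast, zpow_natCast, pow_add, div_eq_mul_inv, ← inv_pow,
      inv_neg_one]
  rw [htf_dotProduct, chebyshev_U_eval_cos_of_mul_eq_int_mul_pi
    (sin_sub_mul_pi_div_ne_zero hkℓ) hangle, hsign]

/-- The modulation `ψ_k = γ (-1)^k φ_k` of a family of vectors. The exponent is `k + 1` because
the paper's index `k` starts at `1`. -/
def modulate {κ : Type*} (γ : ℝ) (Φ : Fin M → κ → ℝ) (k : Fin M) (i : κ) : ℝ :=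
  γ * (-1) ^ ((k : ℕ) + 1) * Φ k i

theorem modulate_dotProduct {κ : Type*} [Fintype κ] {γ : ℝ} (hγ : γ ^ 2 = 1) (Φ : Fin M → κ → ℝ)
    (k ℓ : Fin M) : modulate γ Φ k ⬝ᵥ modulate γ Φ ℓ = (-1) ^ (k + ℓ : ℕ) * (Φ k ⬝ᵥ Φ ℓ) := by
  simp only [dotProduct, modulate, Finset.mul_sum]
  refine Finset.sum_congr rfl fun i _ => ?_
  linear_combination (-1) ^ (k + ℓ : ℕ) * Φ k i * Φ ℓ i * hγ

theorem modulate_htf_dotProduct_self (hN : N ≠ 0) {γ : ℝ} (hγ : γ ^ 2 = 1) (k : Fin M) :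
    modulate γ (htf N M) k ⬝ᵥ modulate γ (htf N M) k = 1 := by
  rw [modulate_dotProduct hγ, htf_dotProduct_self hN, mul_one, Even.neg_one_pow ⟨_, rfl⟩]

theorem modulate_htf_succ_dotProduct_of_ne {γ : ℝ} (hγ : γ ^ 2 = 1) {k ℓ : Fin (N + 1)}
    (hkℓ : k ≠ ℓ) :
    modulate γ (htf N (N + 1)) k ⬝ᵥ modulate γ (htf N (N + 1)) ℓ = -1 / N := by
  rw [modulate_dotProduct hγ, htf_succ_dotProduct_of_ne hkℓ, mul_div_assoc', mul_neg, ← mul_pow]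
  norm_num

end HarmonicFrame

/-- For `M = N + 1`, the modulated harmonic tight frame `ψ_k = γ(-1)^k φ_k` (with a fixed
sign `γ = ±1`; here `htf N M k = φ_{k+1}`) satisfies `⟨ψ_k, ψ_ℓ⟩ = -1/N` for all
`1 ≤ k < ℓ ≤ M`; in particular it is a restricted equiangular tight frame. -/
theorem stmt14 {N : ℕ} (hN : 1 ≤ N) (M : ℕ) (hM : M = N + 1)
    (γ : ℝ) (hγ : γ = 1 ∨ γ = -1) :
    (∀ k ℓ : Fin M, k < ℓ →
      ∑ i : Fin N, (γ * (-1 : ℝ) ^ ((k : ℕ) + 1) * htf N M k i) *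
        (γ * (-1 : ℝ) ^ ((ℓ : ℕ) + 1) * htf N M ℓ i) = -1 / N) ∧
    IsRestrictedETF (fun (k : Fin M) (i : Fin N) =>
      γ * (-1 : ℝ) ^ ((k : ℕ) + 1) * htf N M k i) := by
  subst hM
  have hN0 : N ≠ 0 := Nat.one_le_iff_ne_zero.mp hN
  have hγ_sq : γ ^ 2 = 1 := sq_eq_one_iff.mpr hγ
  exact ⟨fun k ℓ hkℓ => modulate_htf_succ_dotProduct_of_ne hγ_sq hkℓ.ne,
    isRestrictedETF_of_dotProduct_eq hN0 (modulate_htf_dotProduct_self hN0 hγ_sq)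
      fun _ _ => modulate_htf_succ_dotProduct_of_ne hγ_sq⟩
end

section
/- Let M ≥ 3 and let A ∈ ℝ^{M×M} have entries a_{k,j}. If a_{k,j} ≠ a_{ℓ,j} for some pairwise distinct triple of indices (k, j, ℓ) in {1,...,M} (with j the column index, k ≠ j, ℓ ≠ j, k ≠ ℓ), then there exist a permutation matrix O, a composition m of M, and a Variant II initial codeword ŷ_init compatible with m such that the inequality D(m) O A O^{−1} ŷ_init ≥ 0 (elementwise) fails. Equivalently, if the inequality D(m) O A O^{−1} ŷ_init ≥ 0 holds for all such (O, m, ŷ_init), then in each column of A all off-diagonal entries are equal. -/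
/-- `D(m) z ≥ 0` elementwise: `z` is `m`-descending. -/
def DescIneq {M : ℕ} (c : Composition M) (z : Fin M → ℝ) : Prop :=
  ∀ k ℓ : Fin M, (c.index k : ℕ) + 1 = (c.index ℓ : ℕ) → z ℓ ≤ z k

/-- A Variant II initial codeword compatible with the composition `m`. -/
def VarIICodeword {M : ℕ} (c : Composition M) (y : Fin M → ℝ) : Prop :=
  (∀ k ℓ : Fin M, c.index k = c.index ℓ → y k = y ℓ) ∧
  (∀ k ℓ : Fin M, (c.index k : ℕ) < (c.index ℓ : ℕ) → y ℓ < y k) ∧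
  (∀ k : Fin M, 0 ≤ y k)

/-!
Written in unsorted coordinates `w = O⁻¹ ŷ`, the inequality for the composition of `M` into ones
says that `A *ᵥ w` is ordered as `w` is, for every nonnegative `w` with distinct entries: `O` is
the permutation that sorts `w`. If `a_{k,j} < a_{ℓ,j}`, choose such a `w` with `w ℓ < w k` and
then raise `w j`: neither `w k` nor `w ℓ` changes, but the term `a_{·,j} w_j` eventually dominates
and makes `(A *ᵥ w) k < (A *ᵥ w) ℓ`.
-/

open Filter Function Matrix

section Sorting

theorem exists_perm_strictAnti_comp {n : ℕ} {α : Type*} [LinearOrder α] {w : Fin n → α}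
    (hw : Injective w) : ∃ σ : Equiv.Perm (Fin n), StrictAnti (w ∘ σ) := by
  let σ := Tuple.sort (OrderDual.toDual ∘ w)
  have h_anti : Antitone (w ∘ σ) := Tuple.monotone_sort (OrderDual.toDual ∘ w)
  exact ⟨σ, h_anti.strictAnti_of_injective (hw.comp σ.injective)⟩

theorem permMatrix_mul_mul_permMatrix_inv_mulVec_comp {n R : Type*} [Fintype n] [DecidableEq n]
    [CommRing R] (σ : Equiv.Perm n) (A : Matrix n n R) (w : n → R) :
    (σ.permMatrix R * A * σ⁻¹.permMatrix R) *ᵥ (w ∘ σ) = (A *ᵥ w) ∘ σ := by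
  have h_cancel : (w ∘ σ) ∘ ⇑σ⁻¹ = w := by
    ext i
    simp
  rw [← mulVec_mulVec, ← mulVec_mulVec, permMatrix_mulVec, permMatrix_mulVec, h_cancel]

end Sorting

section CompositionOnes

variable {M : ℕ}

theorem index_ones_val (i : Fin M) : ((Composition.ones M).index i : ℕ) = i := by
  have h_le := (Composition.ones M).sizeUpTo_index_le i
  have h_lt := (Composition.ones M).lt_sizeUpTo_index_succ i
  rw [Composition.ones_sizeUpTo] at h_le h_lt
  rw [Fin.val_succ] at h_lt
  omega

theorem varIICodeword_ones_iff {y : Fin M → ℝ} :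
    VarIICodeword (Composition.ones M) y ↔ StrictAnti y ∧ 0 ≤ y := by
  simp only [VarIICodeword, Fin.ext_iff, index_ones_val, Fin.val_fin_lt]
  constructor
  · rintro ⟨-, h_lt, h_nonneg⟩
    exact ⟨fun _ _ h => h_lt _ _ h, h_nonneg⟩
  · rintro ⟨h_anti, h_nonneg⟩
    exact ⟨fun _ _ h => congrArg y (Fin.ext h), fun _ _ h => h_anti h, h_nonneg⟩

theorem descIneq_ones_iff {z : Fin M → ℝ} :
    DescIneq (Composition.ones M) z ↔ Antitone z := by
  simp only [DescIneq, index_ones_val, antitone_iff_forall_covBy, Fin.covBy_iff,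
    Nat.covBy_iff_add_one_eq]

end CompositionOnes

section RaisingOneCoordinate

variable {m n K : Type*}

theorem eventually_injective_update [Finite n] [DecidableEq n] [LinearOrder K] [NoMaxOrder K]
    {u : n → K} (hu : Injective u) (j : n) : ∀ᶠ t in atTop, Injective (update u j t) := by
  have h_above : ∀ᶠ t in atTop, ∀ i, u i < t := eventually_all.2 fun i => eventually_gt_atTop (u i)
  filter_upwards [h_above] with t ht a b hab
  rcases eq_or_ne a j with ha | ha <;> rcases eq_or_ne b j with hb | hb
  · exact ha.trans hb.symm
  · rw [ha, update_self, update_of_ne hb] at hab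
    exact absurd hab (ht b).ne'
  · rw [hb, update_self, update_of_ne ha] at hab
    exact absurd hab (ht a).ne
  · rw [update_of_ne ha, update_of_ne hb] at hab
    exact hu hab

theorem exists_injective_nonneg_lt [Finite n] [Semiring K] [LinearOrder K]
    [IsStrictOrderedRing K] {k ℓ : n} (hkl : k ≠ ℓ) :
    ∃ u : n → K, Injective u ∧ 0 ≤ u ∧ u ℓ < u k := by
  classical
  let v : n → K := fun i => (Finite.equivFin n i : ℕ)
  have hv : Injective v :=
    Nat.cast_injective.comp (Fin.val_injective.comp (Finite.equivFin n).injective)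
  obtain ⟨t, h_inj, h_nonneg, h_lt⟩ := ((eventually_injective_update hv k).and
    ((eventually_ge_atTop 0).and (eventually_gt_atTop (v ℓ)))).exists
  refine ⟨update v k t, h_inj, le_update_iff.2 ⟨h_nonneg, fun i _ => Nat.cast_nonneg _⟩, ?_⟩
  rwa [update_self, update_of_ne hkl.symm]

variable [Fintype n] [Field K] [LinearOrder K] [IsStrictOrderedRing K]

theorem eventually_mulVec_update_lt [DecidableEq n] {A : Matrix m n K} {k ℓ : m} {j : n}
    (hA : A k j < A ℓ j) (u : n → K) :
    ∀ᶠ t in atTop, (A *ᵥ update u j t) k < (A *ᵥ update u j t) ℓ := by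
  have h_affine (t : K) (i : m) :
      (A *ᵥ update u j t) i = (A *ᵥ (u - Pi.single j (u j))) i + A i j * t := by
    rw [Pi.update_eq_sub_add_single, mulVec_add, Pi.add_apply, mulVec_single]
    simp
  have h_tendsto : Tendsto (fun t : K => (A ℓ j - A k j) * t) atTop atTop :=
    tendsto_id.const_mul_atTop (sub_pos.2 hA)
  filter_upwards [h_tendsto.eventually_gt_atTop
    ((A *ᵥ (u - Pi.single j (u j))) k - (A *ᵥ (u - Pi.single j (u j))) ℓ)] with t ht
  rw [h_affine, h_affine]
  linarith

theorem exists_injective_nonneg_lt_mulVec_lt {A : Matrix n n K} {k j ℓ : n} (hkj : k ≠ j)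
    (hlj : ℓ ≠ j) (hA : A k j < A ℓ j) :
    ∃ w : n → K, Injective w ∧ 0 ≤ w ∧ w ℓ < w k ∧ (A *ᵥ w) k < (A *ᵥ w) ℓ := by
  classical
  have hkl : k ≠ ℓ := by
    rintro rfl
    exact hA.false
  obtain ⟨u, hu_inj, hu_nonneg, hu_lt⟩ := exists_injective_nonneg_lt (K := K) hkl
  obtain ⟨t, h_inj, h_nonneg, h_mulVec⟩ := ((eventually_injective_update hu_inj j).and
    ((eventually_ge_atTop 0).and (eventually_mulVec_update_lt hA u))).exists
  refine ⟨update u j t, h_inj, le_update_iff.2 ⟨h_nonneg, fun i _ => hu_nonneg i⟩, ?_, h_mulVec⟩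
  rwa [update_of_ne hlj, update_of_ne hkj]

end RaisingOneCoordinate

theorem exists_not_descIneq_of_mulVec_lt {M : ℕ} {A : Matrix (Fin M) (Fin M) ℝ} {w : Fin M → ℝ}
    (hw_inj : Injective w) (hw_nonneg : 0 ≤ w) {k ℓ : Fin M} (hw_lt : w ℓ < w k)
    (hA : (A *ᵥ w) k < (A *ᵥ w) ℓ) :
    ∃ (σ : Equiv.Perm (Fin M)) (c : Composition M) (y : Fin M → ℝ),
      VarIICodeword c y ∧ ¬ DescIneq c ((σ.permMatrix ℝ * A * σ⁻¹.permMatrix ℝ) *ᵥ y) := by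
  obtain ⟨σ, h_anti⟩ := exists_perm_strictAnti_comp hw_inj
  refine ⟨σ, Composition.ones M, w ∘ σ,
    varIICodeword_ones_iff.2 ⟨h_anti, fun i => hw_nonneg (σ i)⟩, ?_⟩
  rw [descIneq_ones_iff, permMatrix_mul_mul_permMatrix_inv_mulVec_comp]
  intro h_antitone
  have h_pos : σ⁻¹ k < σ⁻¹ ℓ := h_anti.lt_iff_gt.1 (by simpa using hw_lt)
  exact hA.not_ge (by simpa using h_antitone h_pos.le)

open Matrix in
/-- If `M ≥ 3` and `a_{k,j} ≠ a_{ℓ,j}` for some pairwise distinct triple `(k, j, ℓ)` (two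
off-diagonal entries of column `j` differ), then there exist a permutation matrix `O`, a
composition `m` of `M` and a Variant II initial codeword `ŷ_init` compatible with `m` such that
the inequality `D(m) O A O⁻¹ ŷ_init ≥ 0` fails. -/
theorem stmt16 {M : ℕ} (hM : 3 ≤ M) (A : Matrix (Fin M) (Fin M) ℝ)
    (k j ℓ : Fin M) (hkj : k ≠ j) (hlj : ℓ ≠ j) (hkl : k ≠ ℓ)
    (hne : A k j ≠ A ℓ j) :
    ∃ (σ : Equiv.Perm (Fin M)) (c : Composition M) (y : Fin M → ℝ),
      VarIICodeword c y ∧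
      ¬ DescIneq c (((σ.permMatrix ℝ) * A * ((σ⁻¹).permMatrix ℝ)) *ᵥ y) := by
  wlog hlt : A k j < A ℓ j generalizing k ℓ
  · exact this ℓ k hlj hkj hkl.symm hne.symm (hne.lt_or_gt.resolve_left hlt)
  obtain ⟨w, hw_inj, hw_nonneg, hw_lt, hw_mulVec⟩ :=
    exists_injective_nonneg_lt_mulVec_lt hkj hlj hlt
  exact exists_not_descIneq_of_mulVec_lt hw_inj hw_nonneg hw_lt hw_mulVec
end
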